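/- arXiv:1710.08223 — 7 statements merged into one kernel-verified Lean document; each statement's English description precedes it below -/
import Mathlib

section
/- For every real r > 0 and every real κ ≥ 0, the Gaussian mass of the integer tail beyond √κ·r satisfies ∑_{j∈ℤ, |j| > √κ·r} exp(−π j²/r²) ≤ 2·exp(−(3π/4)·κ) · ∑_{j∈ℤ} exp(−π j²/r²). -/
open Real

/-!
Let `ρ_r(x) = exp (-π x² / r²)`. For `s ≠ 0`,
`ρ_r(x) = exp (-π (1 - s⁻²) x² / r²) * ρ_{sr}(x)`, and when `1 ≤ s` the first factor is at most
`exp (-π (1 - s⁻²) t²)` wherever `t r ≤ |x|`. So widening the Gaussian by `s` gains exponential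
decay on the tail, and by Poisson summation, `ρ_r(ℤ) = r ρ_{1/r}(ℤ)`, it costs no more than a
factor `s` in total mass. The constants `2` and `3π/4` come from `s = 2`.
-/

/-- The Gaussian function `ρ_r` of width `r`, normalized so that its Fourier transform is
`r * ρ_{1/r}`. For `r = 0` the division by zero makes it constantly `1`. -/
noncomputable def gaussianFun (r x : ℝ) : ℝ := Real.exp (-π * x ^ 2 / r ^ 2)

section GaussianFun

variable {r s t x : ℝ}

lemma gaussianFun_nonneg (r x : ℝ) : 0 ≤ gaussianFun r x := (Real.exp_pos _).le

lemma gaussianFun_le_gaussianFun (hr : 0 < r) (hrs : r ≤ s) (x : ℝ) :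
    gaussianFun r x ≤ gaussianFun s x := by
  simp only [gaussianFun, neg_mul, neg_div]
  gcongr

lemma gaussianFun_eq_exp_mul_gaussianFun_mul (r x : ℝ) (hs : s ≠ 0) :
    gaussianFun r x =
      Real.exp (-π * (1 - (s ^ 2)⁻¹) * (x ^ 2 / r ^ 2)) * gaussianFun (s * r) x := by
  rw [gaussianFun, gaussianFun, ← Real.exp_add]
  congr 1
  field_simp
  ring

lemma gaussianFun_le_exp_mul_gaussianFun_mul (hr : 0 < r) (hs : 1 ≤ s) (ht : 0 ≤ t)
    (hx : t * r ≤ |x|) :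
    gaussianFun r x ≤ Real.exp (-π * (1 - (s ^ 2)⁻¹) * t ^ 2) * gaussianFun (s * r) x := by
  have ht_sq : t ^ 2 ≤ x ^ 2 / r ^ 2 := by
    rw [le_div_iff₀ (by positivity), ← mul_pow, ← sq_abs x]
    gcongr
  have hs_sq : 0 ≤ 1 - (s ^ 2)⁻¹ := sub_nonneg.2 (inv_le_one_of_one_le₀ (one_le_pow₀ hs))
  rw [gaussianFun_eq_exp_mul_gaussianFun_mul r x (by positivity : s ≠ 0)]
  simp only [neg_mul]
  gcongr
  exact gaussianFun_nonneg _ _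

lemma summable_gaussianFun_int (hr : r ≠ 0) : Summable fun n : ℤ ↦ gaussianFun r n := by
  refine (HurwitzZeta.hasSum_int_evenKernel 0 (t := (r ^ 2)⁻¹) (by positivity)).summable.congr
    fun n ↦ ?_
  rw [gaussianFun, add_zero, div_eq_mul_inv]

lemma tsum_gaussianFun_int (hr : 0 < r) :
    ∑' n : ℤ, gaussianFun r n = r * ∑' n : ℤ, gaussianFun r⁻¹ n := by
  have poisson := Real.tsum_exp_neg_mul_int_sq (a := (r ^ 2)⁻¹) (by positivity)
  have hsqrt : 1 / ((r ^ 2)⁻¹) ^ (1 / 2 : ℝ) = r := by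
    rw [← Real.sqrt_eq_rpow, Real.sqrt_inv, Real.sqrt_sq hr.le, one_div, inv_inv]
  rw [hsqrt] at poisson
  convert poisson using 4 with n n
  · rw [gaussianFun]
    congr 1
    ring
  · rw [gaussianFun, inv_pow]
    congr 1
    ring

lemma tsum_gaussianFun_mul_int_le (hr : 0 < r) (hs : 1 ≤ s) :
    ∑' n : ℤ, gaussianFun (s * r) n ≤ s * ∑' n : ℤ, gaussianFun r n := by
  have hsr : 0 < s * r := by positivity
  have dual_le : ∑' n : ℤ, gaussianFun (s * r)⁻¹ n ≤ ∑' n : ℤ, gaussianFun r⁻¹ n :=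
    (summable_gaussianFun_int (inv_ne_zero hsr.ne')).tsum_le_tsum
      (fun n ↦ gaussianFun_le_gaussianFun (inv_pos.2 hsr)
        (inv_anti₀ hr (le_mul_of_one_le_left hr.le hs)) n)
      (summable_gaussianFun_int (inv_ne_zero hr.ne'))
  calc ∑' n : ℤ, gaussianFun (s * r) n
      = s * r * ∑' n : ℤ, gaussianFun (s * r)⁻¹ n := tsum_gaussianFun_int hsr
    _ ≤ s * r * ∑' n : ℤ, gaussianFun r⁻¹ n := by gcongr
    _ = s * ∑' n : ℤ, gaussianFun r n := by rw [tsum_gaussianFun_int hr, mul_assoc]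

lemma tsum_gaussianFun_int_tail_le (hr : 0 < r) (hs : 1 ≤ s) (ht : 0 ≤ t) :
    ∑' j : {j : ℤ // t * r < |(j : ℝ)|}, gaussianFun r (j : ℤ) ≤
      s * Real.exp (-π * (1 - (s ^ 2)⁻¹) * t ^ 2) * ∑' j : ℤ, gaussianFun r j := by
  set E := Real.exp (-π * (1 - (s ^ 2)⁻¹) * t ^ 2)
  let tail : Set ℤ := {j | t * r < |(j : ℝ)|}
  have summable_wide : Summable fun j : ℤ ↦ E * gaussianFun (s * r) j :=
    (summable_gaussianFun_int (by positivity)).mul_left E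
  calc ∑' j : tail, gaussianFun r (j : ℤ)
      ≤ ∑' j : tail, E * gaussianFun (s * r) (j : ℤ) :=
        ((summable_gaussianFun_int hr.ne').subtype tail).tsum_le_tsum
          (fun j ↦ gaussianFun_le_exp_mul_gaussianFun_mul hr hs ht j.2.le)
          (summable_wide.subtype tail)
    _ ≤ ∑' j : ℤ, E * gaussianFun (s * r) j :=
        summable_wide.tsum_subtype_le _ tail
          fun j ↦ mul_nonneg (Real.exp_pos _).le (gaussianFun_nonneg _ _)
    _ = E * ∑' j : ℤ, gaussianFun (s * r) j := tsum_mul_left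
    _ ≤ E * (s * ∑' j : ℤ, gaussianFun r j) := by
        gcongr
        exact tsum_gaussianFun_mul_int_le hr hs
    _ = s * E * ∑' j : ℤ, gaussianFun r j := by ring

end GaussianFun

/-- **Gaussian tail bound over the integers** (paper's Lemma 2.1, explicit constant).
For every `r > 0` and `κ ≥ 0`, the Gaussian mass of the integer tail beyond `√κ · r`
satisfies `∑_{j ∈ ℤ, |j| > √κ·r} exp(−π j²/r²) ≤ 2 exp(−(3π/4) κ) ∑_{j ∈ ℤ} exp(−π j²/r²)`. -/
theorem gaussian_tail_bound (r κ : ℝ) (hr : 0 < r) (hκ : 0 ≤ κ) :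
    (∑' j : {j : ℤ // Real.sqrt κ * r < |(j : ℝ)|}, Real.exp (-π * ((j : ℤ) : ℝ)^2 / r^2))
      ≤ 2 * Real.exp (-(3 * π / 4) * κ) *
        (∑' j : ℤ, Real.exp (-π * (j : ℝ)^2 / r^2)) := by
  have decay_rate : -π * (1 - ((2 : ℝ) ^ 2)⁻¹) * √κ ^ 2 = -(3 * π / 4) * κ := by
    rw [Real.sq_sqrt hκ]
    ring
  rw [← decay_rate]
  exact tsum_gaussianFun_int_tail_le hr one_le_two (Real.sqrt_nonneg κ)
end

section
/- Let n ≥ 1, let L be a full-rank lattice in ℝⁿ (a discrete additive subgroup of ℝⁿ whose ℝ-linear span is all of ℝⁿ), let u ∈ ℝⁿ and let r > 0. Then ∑_{x∈L, ‖x+u‖ > √n·r} exp(−π‖x+u‖²/r²) ≤ 2^{−n} · ∑_{x∈L} exp(−π‖x‖²/r²), where ‖·‖ is the Euclidean norm. -/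
/-!
Write `G_a(u) = ∑_{x ∈ L} exp (-a ‖x + u‖²)`. Rotating `L × L` by `(p, q) ↦ (p + q, p - q)` and
sorting the image by classes modulo `2L` gives, by the parallelogram law and Cauchy–Schwarz, the
Regev–Stephens-Davidowitz inequality `(G_a(u) G_a(v))² ≤ G_a(u + v) G_a(u - v) G_a(0)²`. Hence
`f = G_a / G_a(0)` satisfies `f(u)⁴ ≤ f(2u)`; as `f` is bounded, iterating forces `f ≤ 1`. This
replaces the usual appeal to Poisson summation.

Splitting `L` into its `2 ^ k` classes modulo `2L`, where `k` is the rank, then yields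
`G_{a/4}(u) ≤ 2 ^ k G_a(0)`, and on the tail `‖x + u‖ > √n r`, with `a = π / r²`, each term of
`G_a(u)` is at most `exp (-3πn/4) ≤ 4 ^ (-n)` times the corresponding term of `G_{a/4}(u)`.
-/

open Real

section ModN

variable (M : Type*) [AddCommGroup M] [Module.IsTorsionFree ℤ M]

/-- The decomposition of a torsion-free group `M` into its classes modulo `m`, each of them
parametrized by `M` through `x ↦ m • x + c.out`. -/
noncomputable def modNProdEquiv (m : ℕ) [NeZero m] : ModN M m × M ≃ M :=
  Equiv.ofBijective (fun p ↦ m • p.2 + p.1.out) <| by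
    have mk_eq (c : ModN M m) (x : M) : Submodule.Quotient.mk (m • x + c.out) = c := by
      have hx : m • x ∈ LinearMap.range (LinearMap.lsmul ℤ M m) := ⟨x, by simp⟩
      rw [Submodule.Quotient.mk_add, (Submodule.Quotient.mk_eq_zero _).2 hx, zero_add]
      exact Quotient.out_eq c
    have : IsAddTorsionFree M := Module.isTorsionFree_int_iff_isAddTorsionFree.1 ‹_›
    constructor
    · rintro ⟨c, x⟩ ⟨d, y⟩ (h : m • x + c.out = m • y + d.out)
      obtain rfl : c = d := by rw [← mk_eq c x, h, mk_eq]
      rw [nsmul_right_injective (NeZero.ne m) (add_right_cancel h)]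
    · intro y
      let c : ModN M m := Submodule.Quotient.mk y
      obtain ⟨x, hx⟩ := (Submodule.Quotient.eq _).1 (Quotient.out_eq c).symm
      exact ⟨(c, x), by simpa [← eq_sub_iff_add_eq] using hx⟩

theorem modNProdEquiv_apply (m : ℕ) [NeZero m] (p : ModN M m × M) :
    modNProdEquiv M m p = m • p.2 + p.1.out := rfl

/-- The rotation `(p, q) ↦ (p + q, p - q)` of `M × M`, completed to a bijection. By itself it only
reaches the pairs which are congruent modulo `2`; translating the first coordinate by
representatives of `M / 2M` reaches all pairs, once each. -/
noncomputable def modNProdRotationEquiv : ModN M 2 × (M × M) ≃ M × M where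
  toFun t := (t.2.1 + t.2.2 + t.1.out, t.2.1 - t.2.2)
  invFun z :=
    let d := (modNProdEquiv M 2).symm (z.1 - z.2)
    (d.1, (z.2 + d.2, d.2))
  left_inv := by
    rintro ⟨c, p, q⟩
    have h : p + q + c.out - (p - q) = modNProdEquiv M 2 (c, q) := by
      rw [modNProdEquiv_apply]
      abel
    simp [h]
  right_inv := by
    rintro ⟨x, y⟩
    set d := (modNProdEquiv M 2).symm (x - y)
    have h : 2 • d.2 + d.1.out = x - y := (modNProdEquiv M 2).apply_symm_apply (x - y)
    have hx : y + d.2 + d.2 + d.1.out = x := by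
      rw [← sub_add_cancel x y, ← h]
      abel
    exact Prod.ext hx (add_sub_cancel_right y d.2)

theorem modNProdRotationEquiv_apply (t : ModN M 2 × (M × M)) :
    modNProdRotationEquiv M t = (t.2.1 + t.2.2 + t.1.out, t.2.1 - t.2.2) := rfl

end ModN

theorem le_one_of_pow_le_comp {α : Type*} {f : α → ℝ} {g : α → α} {k : ℕ} (hk : 2 ≤ k)
    (hf : BddAbove (Set.range f)) (h : ∀ x, f x ^ k ≤ f (g x)) (x : α) : f x ≤ 1 := by
  by_contra! hx
  set S := ⨆ y, f y
  have hS : 1 < S := hx.trans_le (le_ciSup hf x)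
  have : Nonempty α := ⟨x⟩
  obtain ⟨y, hy⟩ : ∃ y, √S < f y := exists_lt_of_lt_ciSup (sqrt_lt_self_iff.2 hS)
  have hy1 : 1 ≤ f y := (one_le_sqrt.2 hS.le).trans hy.le
  have : S < S := calc
    S < f y ^ 2 := (sqrt_lt' (by positivity)).1 hy
    _ ≤ f y ^ k := pow_le_pow_right₀ hy1 hk
    _ ≤ f (g y) := h y
    _ ≤ S := le_ciSup hf _
  exact this.false

theorem exp_neg_three_quarters_pi_le : exp (-(3 / 4 * π)) ≤ 4⁻¹ := by
  rw [exp_neg]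
  gcongr
  have := quadratic_le_exp_of_nonneg (x := 3 / 4 * π) (by positivity)
  nlinarith [pi_gt_three]

section GaussianSum

open Filter Module

variable {E : Type*} [NormedAddCommGroup E]

/-- The Gaussian mass `∑ x ∈ L, exp (-a ‖x + u‖²)` of the coset `L + u`; it is `ρ_r(L + u)` for
`a = π / r²`. The inverse square width `a` is the parameter because the argument rescales it by
rational factors. -/
noncomputable def gaussianSum (L : Submodule ℤ E) (a : ℝ) (u : E) : ℝ :=
  ∑' x : L, exp (-a * ‖(x : E) + u‖ ^ 2)

theorem gaussianSum_add_coe (L : Submodule ℤ E) (a : ℝ) (u : E) (y : L) :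
    gaussianSum L a (u + y) = gaussianSum L a u := by
  unfold gaussianSum
  rw [← (Equiv.addRight y).tsum_eq fun x : L ↦ exp (-a * ‖(x : E) + u‖ ^ 2)]
  simp only [Equiv.coe_addRight, Submodule.coe_add, add_assoc, add_comm u]

variable [NormedSpace ℝ E] [FiniteDimensional ℝ E] (L : Submodule ℤ E) [DiscreteTopology L]

theorem tendsto_norm_coe_add_cofinite_atTop (u : E) :
    Tendsto (fun x : L ↦ ‖(x : E) + u‖) cofinite atTop := by
  have hL : Tendsto ((↑) : L → E) cofinite (cocompact E) :=
    L.toAddSubgroup.tendsto_coe_cofinite_of_discrete ⟨‹_›⟩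
  have hu : Tendsto (· + u) (cocompact E) (cocompact E) :=
    (Homeomorph.addRight u).isClosedEmbedding.tendsto_cocompact
  exact (tendsto_norm_cocompact_atTop (E := E)).comp (hu.comp hL)

variable {a : ℝ}

theorem summable_exp_neg_mul_norm_add_sq (ha : 0 < a) (u : E) :
    Summable fun x : L ↦ exp (-a * ‖(x : E) + u‖ ^ 2) := by
  set s : ℝ := -finrank ℤ L - 1
  have hpow : Summable fun x : L ↦ ‖(x : E) + u‖ ^ s := by
    simpa using ZLattice.summable_norm_sub_rpow L s (by grind) (-u)
  have hdecay : (fun t : ℝ ↦ exp (-a * t ^ 2)) =o[atTop] fun t : ℝ ↦ t ^ s :=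
    (exp_neg_mul_sq_isLittleO_exp_neg ha).trans <| by
      simpa using isLittleO_exp_neg_mul_rpow_atTop one_pos s
  exact summable_of_isBigO hpow
    (hdecay.isBigO.comp_tendsto (tendsto_norm_coe_add_cofinite_atTop L u))

theorem gaussianSum_pos (ha : 0 < a) (u : E) : 0 < gaussianSum L a u :=
  (summable_exp_neg_mul_norm_add_sq L ha u).tsum_pos (fun _ ↦ (exp_pos _).le) 0 (exp_pos _)

theorem gaussianSum_le_gaussianSum_div_four_zero (ha : 0 < a) (u : E) :
    gaussianSum L a u ≤ gaussianSum L (a / 4) 0 := by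
  -- Periodicity allows `u` to be replaced by the shortest vector `v` of its coset `u + L`.
  obtain ⟨y, hy⟩ := (tendsto_norm_coe_add_cofinite_atTop L u).exists_forall_le
  set v := u + y with hv
  have hmin (x : L) : ‖v‖ ≤ ‖(x : E) + v‖ := by
    simpa [hv, add_assoc, add_comm, add_left_comm] using hy (x + y)
  rw [← gaussianSum_add_coe L a u y]
  refine (summable_exp_neg_mul_norm_add_sq L ha v).tsum_le_tsum (fun x ↦ ?_)
    (summable_exp_neg_mul_norm_add_sq L (by positivity) 0)
  have hx : ‖(x : E)‖ ≤ 2 * ‖(x : E) + v‖ := calc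
    ‖(x : E)‖ = ‖(x : E) + v - v‖ := by rw [add_sub_cancel_right]
    _ ≤ ‖(x : E) + v‖ + ‖v‖ := norm_sub_le _ _
    _ ≤ 2 * ‖(x : E) + v‖ := by linarith [hmin x]
  have hsq : ‖(x : E)‖ ^ 2 ≤ (2 * ‖(x : E) + v‖) ^ 2 := by gcongr
  rw [add_zero, exp_le_exp]
  nlinarith

theorem summable_exp_mul_exp (ha : 0 < a) (u v : E) :
    Summable fun z : L × L ↦ exp (-a * ‖(z.1 : E) + u‖ ^ 2) * exp (-a * ‖(z.2 : E) + v‖ ^ 2) :=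
  (summable_exp_neg_mul_norm_add_sq L ha u).mul_of_nonneg
    (summable_exp_neg_mul_norm_add_sq L ha v) (fun _ ↦ (exp_pos _).le) (fun _ ↦ (exp_pos _).le)

theorem gaussianSum_mul_gaussianSum_eq_tsum (ha : 0 < a) (u v : E) :
    gaussianSum L a u * gaussianSum L a v =
      ∑' z : L × L, exp (-a * ‖(z.1 : E) + u‖ ^ 2) * exp (-a * ‖(z.2 : E) + v‖ ^ 2) :=
  (summable_exp_neg_mul_norm_add_sq L ha u).tsum_mul_tsum
    (summable_exp_neg_mul_norm_add_sq L ha v) (summable_exp_mul_exp L ha u v)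

theorem gaussianSum_eq_sum_modN (m : ℕ) [NeZero m] [Fintype (ModN L m)] (ha : 0 < a) (u : E) :
    gaussianSum L a u =
      ∑ c : ModN L m, gaussianSum L (m ^ 2 * a) ((m : ℝ)⁻¹ • ((c.out : L) + u)) := by
  have hm : (m : ℝ) ≠ 0 := NeZero.ne _
  have hterm (p : ModN L m × L) : exp (-a * ‖(modNProdEquiv L m p : E) + u‖ ^ 2) =
      exp (-(m ^ 2 * a) * ‖(p.2 : E) + (m : ℝ)⁻¹ • ((p.1.out : L) + u)‖ ^ 2) := by
    have hscale : (modNProdEquiv L m p : E) + u =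
        (m : ℝ) • ((p.2 : E) + (m : ℝ)⁻¹ • ((p.1.out : L) + u)) := by
      rw [modNProdEquiv_apply, smul_add, smul_inv_smul₀ hm, Nat.cast_smul_eq_nsmul]
      push_cast
      abel
    rw [hscale, norm_smul, Real.norm_natCast]
    ring_nf
  have hsum := (modNProdEquiv L m).summable_iff.2 (summable_exp_neg_mul_norm_add_sq L ha u)
  unfold gaussianSum
  rw [← (modNProdEquiv L m).tsum_eq, tsum_congr hterm, (hsum.congr hterm).tsum_prod, tsum_fintype]

theorem tsum_tail_le_exp_mul_gaussianSum {b t : ℝ} (hb : 0 < b) (hba : b ≤ a) (ht : 0 ≤ t)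
    (u : E) :
    ∑' x : {x : L // t < ‖(x : E) + u‖}, exp (-a * ‖((x : L) : E) + u‖ ^ 2) ≤
      exp (-(a - b) * t ^ 2) * gaussianSum L b u := by
  have hsum := (summable_exp_neg_mul_norm_add_sq L hb u).mul_left (exp (-(a - b) * t ^ 2))
  have hterm (x : {x : L // t < ‖(x : E) + u‖}) : exp (-a * ‖((x : L) : E) + u‖ ^ 2) ≤
      exp (-(a - b) * t ^ 2) * exp (-b * ‖((x : L) : E) + u‖ ^ 2) := by
    have hsq : t ^ 2 ≤ ‖((x : L) : E) + u‖ ^ 2 := by gcongr; exact x.2.le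
    rw [← exp_add, exp_le_exp]
    nlinarith
  calc _ ≤ ∑' x : {x : L // t < ‖(x : E) + u‖},
        exp (-(a - b) * t ^ 2) * exp (-b * ‖((x : L) : E) + u‖ ^ 2) :=
        ((summable_exp_neg_mul_norm_add_sq L (hb.trans_le hba) u).subtype _).tsum_le_tsum hterm
          (hsum.subtype _)
    _ ≤ ∑' x : L, exp (-(a - b) * t ^ 2) * exp (-b * ‖(x : E) + u‖ ^ 2) :=
        hsum.tsum_subtype_le _ _ fun _ ↦ by positivity
    _ = exp (-(a - b) * t ^ 2) * gaussianSum L b u := tsum_mul_left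

end GaussianSum

section InnerProductSpace

open Module

variable {E : Type*} [NormedAddCommGroup E] [InnerProductSpace ℝ E]

theorem exp_norm_add_sq_mul_exp_norm_sub_sq (a : ℝ) (x y : E) :
    exp (-a * ‖x + y‖ ^ 2) * exp (-a * ‖x - y‖ ^ 2) =
      exp (-(2 * a) * ‖x‖ ^ 2) * exp (-(2 * a) * ‖y‖ ^ 2) := by
  rw [← exp_add, ← exp_add]
  congr 1
  linear_combination -a * parallelogram_law_with_norm ℝ x y

variable [FiniteDimensional ℝ E] (L : Submodule ℤ E) [DiscreteTopology L] {a : ℝ}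

theorem gaussianSum_mul_gaussianSum [Fintype (ModN L 2)] (ha : 0 < a) (u v : E) :
    gaussianSum L a u * gaussianSum L a v = ∑ c : ModN L 2,
      gaussianSum L (2 * a) ((2 : ℝ)⁻¹ • ((c.out : L) + (u + v))) *
        gaussianSum L (2 * a) ((2 : ℝ)⁻¹ • ((c.out : L) + (u - v))) := by
  let e := modNProdRotationEquiv L
  let F (c : ModN L 2) (z : L × L) : ℝ :=
    exp (-(2 * a) * ‖(z.1 : E) + (2 : ℝ)⁻¹ • ((c.out : L) + (u + v))‖ ^ 2) *
      exp (-(2 * a) * ‖(z.2 : E) + (2 : ℝ)⁻¹ • ((c.out : L) + (u - v))‖ ^ 2)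
  have hterm (t : ModN L 2 × (L × L)) :
      exp (-a * ‖((e t).1 : E) + u‖ ^ 2) * exp (-a * ‖((e t).2 : E) + v‖ ^ 2) = F t.1 t.2 := by
    simp only [e, F, modNProdRotationEquiv_apply]
    rw [← exp_norm_add_sq_mul_exp_norm_sub_sq]
    push_cast
    congr 5 <;> module
  have hsum : Summable fun t : ModN L 2 × (L × L) ↦ F t.1 t.2 := by
    simpa only [Function.comp_def, hterm] using e.summable_iff.2 (summable_exp_mul_exp L ha u v)
  calc gaussianSum L a u * gaussianSum L a v
      = ∑' t : ModN L 2 × (L × L), F t.1 t.2 := by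
        rw [gaussianSum_mul_gaussianSum_eq_tsum L ha, ← e.tsum_eq]
        exact tsum_congr hterm
    _ = ∑ c, ∑' z, F c z := by rw [hsum.tsum_prod, tsum_fintype]
    _ = _ := Finset.sum_congr rfl fun c _ ↦
        (gaussianSum_mul_gaussianSum_eq_tsum L (by positivity) _ _).symm

theorem sq_gaussianSum_mul_gaussianSum_le (ha : 0 < a) (u v : E) :
    (gaussianSum L a u * gaussianSum L a v) ^ 2 ≤
      gaussianSum L a (u + v) * gaussianSum L a (u - v) * gaussianSum L a 0 ^ 2 := by
  have := Fintype.ofFinite (ModN L 2)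
  let A (t : E) (c : ModN L 2) : ℝ := gaussianSum L (2 * a) ((2 : ℝ)⁻¹ • ((c.out : L) + t))
  have sum_sq (t : E) : ∑ c, A t c ^ 2 = gaussianSum L a t * gaussianSum L a 0 := by
    simp only [gaussianSum_mul_gaussianSum L ha t 0, add_zero, sub_zero, sq, A]
  calc (gaussianSum L a u * gaussianSum L a v) ^ 2
      = (∑ c, A (u + v) c * A (u - v) c) ^ 2 := by rw [gaussianSum_mul_gaussianSum L ha u v]
    _ ≤ (∑ c, A (u + v) c ^ 2) * ∑ c, A (u - v) c ^ 2 := Finset.sum_mul_sq_le_sq_mul_sq ..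
    _ = _ := by rw [sum_sq, sum_sq]; ring

theorem gaussianSum_le_gaussianSum_zero (ha : 0 < a) (u : E) :
    gaussianSum L a u ≤ gaussianSum L a 0 := by
  have h0 := gaussianSum_pos L ha 0
  have hbdd : BddAbove (Set.range fun v ↦ gaussianSum L a v / gaussianSum L a 0) :=
    ⟨gaussianSum L (a / 4) 0 / gaussianSum L a 0, by
      rintro _ ⟨v, rfl⟩
      have := gaussianSum_le_gaussianSum_div_four_zero L ha v
      dsimp only
      gcongr⟩
  refine (div_le_one h0).1 <|
    le_one_of_pow_le_comp (g := fun v ↦ v + v) (k := 4) (by norm_num) hbdd (fun v ↦ ?_) u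
  have hdouble := sq_gaussianSum_mul_gaussianSum_le L ha v v
  rw [sub_self] at hdouble
  rw [div_pow, div_le_div_iff₀ (by positivity) h0]
  linear_combination gaussianSum L a 0 * hdouble

theorem gaussianSum_le_pow_finrank_mul (m : ℕ) [NeZero m] (ha : 0 < a) (u : E) :
    gaussianSum L a u ≤ m ^ finrank ℤ L * gaussianSum L (m ^ 2 * a) 0 := by
  have := Fintype.ofFinite (ModN L m)
  have hm : (0 : ℝ) < m := mod_cast NeZero.pos m
  calc gaussianSum L a u
      = ∑ c : ModN L m, gaussianSum L (m ^ 2 * a) ((m : ℝ)⁻¹ • ((c.out : L) + u)) :=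
        gaussianSum_eq_sum_modN L m ha u
    _ ≤ ∑ _c : ModN L m, gaussianSum L (m ^ 2 * a) 0 :=
        Finset.sum_le_sum fun c _ ↦ gaussianSum_le_gaussianSum_zero L (by positivity) _
    _ = m ^ finrank ℤ L * gaussianSum L (m ^ 2 * a) 0 := by
        rw [Finset.sum_const, Finset.card_univ, ← Nat.card_eq_fintype_card, ModN.natCard_eq,
          nsmul_eq_mul, Nat.cast_pow]

theorem banaszczyk_tail_bound_general {n : ℕ} (hn : finrank ℤ L ≤ n) (u : E) {r : ℝ}
    (hr : 0 < r) :
    ∑' x : {x : L // √n * r < ‖(x : E) + u‖}, exp (-π * ‖((x : L) : E) + u‖ ^ 2 / r ^ 2) ≤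
      2 ^ (-(n : ℤ)) * ∑' x : L, exp (-π * ‖(x : E)‖ ^ 2 / r ^ 2) := by
  set a := π / r ^ 2 with ha_def
  have ha : 0 < a := by positivity
  have hexponent (t : ℝ) : -π * t / r ^ 2 = -a * t := by rw [ha_def]; ring
  have hG : ∑' x : L, exp (-a * ‖(x : E)‖ ^ 2) = gaussianSum L a 0 := by
    simp only [gaussianSum, add_zero]
  have hconst : exp (-(a - a / 4) * (√n * r) ^ 2) ≤ 4⁻¹ ^ n := calc
    exp (-(a - a / 4) * (√n * r) ^ 2) = exp (n * -(3 / 4 * π)) := by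
      rw [mul_pow, sq_sqrt n.cast_nonneg, ha_def]
      congr 1
      field_simp
      ring
    _ = exp (-(3 / 4 * π)) ^ n := exp_nat_mul _ n
    _ ≤ 4⁻¹ ^ n := by gcongr; exact exp_neg_three_quarters_pi_le
  have hscale : gaussianSum L (a / 4) u ≤ 2 ^ n * gaussianSum L a 0 := calc
    gaussianSum L (a / 4) u ≤ 2 ^ finrank ℤ L * gaussianSum L (2 ^ 2 * (a / 4)) 0 :=
      mod_cast gaussianSum_le_pow_finrank_mul L 2 (by positivity) u
    _ ≤ 2 ^ n * gaussianSum L a 0 := by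
      rw [show 2 ^ 2 * (a / 4) = a by ring]
      have := gaussianSum_pos L ha 0
      gcongr
      norm_num
  simp only [hexponent, hG]
  calc _ ≤ exp (-(a - a / 4) * (√n * r) ^ 2) * gaussianSum L (a / 4) u :=
        tsum_tail_le_exp_mul_gaussianSum L (by positivity) (by linarith) (by positivity) u
    _ ≤ 4⁻¹ ^ n * (2 ^ n * gaussianSum L a 0) := by
        have := gaussianSum_pos L (by positivity : 0 < a / 4) u
        gcongr
    _ = 2 ^ (-(n : ℤ)) * gaussianSum L a 0 := by
        rw [← mul_assoc, ← mul_pow, zpow_neg, zpow_natCast, ← inv_pow]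
        norm_num

end InnerProductSpace

/-- **Banaszczyk's tail bound** (paper's Lemma 2.2, with the implicit constant `2^{-n}`).
For a full-rank lattice `L ⊆ ℝⁿ`, any shift `u` and any `r > 0`,
`∑_{x ∈ L, ‖x+u‖ > √n r} exp(−π‖x+u‖²/r²) ≤ 2^{-n} ∑_{x ∈ L} exp(−π‖x‖²/r²)`. -/
theorem banaszczyk_tail_bound (n : ℕ) (hn : 1 ≤ n)
    (L : AddSubgroup (EuclideanSpace ℝ (Fin n))) [DiscreteTopology L]
    (hL : Submodule.span ℝ (L : Set (EuclideanSpace ℝ (Fin n))) = ⊤)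
    (u : EuclideanSpace ℝ (Fin n)) (r : ℝ) (hr : 0 < r) :
    (∑' x : {v : L // Real.sqrt n * r < ‖(v : EuclideanSpace ℝ (Fin n)) + u‖},
        Real.exp (-π * ‖((x : L) : EuclideanSpace ℝ (Fin n)) + u‖^2 / r^2))
      ≤ (2 : ℝ)^(-(n : ℤ)) *
        (∑' x : L, Real.exp (-π * ‖(x : EuclideanSpace ℝ (Fin n))‖^2 / r^2)) := by
  have : DiscreteTopology L.toIntSubmodule := ‹DiscreteTopology L›
  have : IsZLattice ℝ L.toIntSubmodule := ⟨hL⟩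
  exact banaszczyk_tail_bound_general L.toIntSubmodule (by simp [ZLattice.rank ℝ]) u hr
end

section
/- Let q be a prime, let m, n ≥ 1 be integers, and let B be a real number with 0 ≤ B < q/2. For A drawn uniformly at random from the set of m×n matrices over ℤ/qℤ, the probability that the q-ary lattice Λ_q(A) contains a nonzero vector y with ‖y‖_∞ ≤ B is at most q^{n−m}·(2B+1)^m. -/
/-!
If `x` has an invertible coordinate, then `A ↦ A x` is a surjective homomorphism, so `A x` is
uniformly distributed when `A` is. A nonzero `y ∈ Λ_q(A)` with `‖y‖_∞ < q` has a nonzero residue,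
hence is witnessed by a nonzero `x`. The bound is the union bound over the `q ^ n` vectors `x` and
the at most `(2B + 1) ^ m` residues of the integer points of the box. For `B ≥ q` the right-hand
side is at least `1`.
-/

open Matrix

theorem ncard_preimage_mul_card_of_surjective {G H : Type*} [AddGroup G] [AddGroup H]
    {f : G →+ H} (hf : Function.Surjective f) (S : Set H) :
    (f ⁻¹' S).ncard * Nat.card H = Nat.card G * S.ncard := by
  have card_preimage (T : Set H) : (f ⁻¹' T).ncard = T.ncard * Nat.card f.ker := by
    let e : f ⁻¹' T ≃ T × f.ker :=
      (Equiv.sigmaSubtypeFiberEquivSubtype f fun _ ↦ Iff.rfl).symm.trans <|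
        (Equiv.sigmaCongrRight fun t : T ↦
          AddMonoidHom.fiberEquivKerOfSurjective hf (t : H)).trans (Equiv.sigmaEquivProd _ _)
    exact (Nat.card_congr e).trans (Nat.card_prod _ _)
  have card_domain : Nat.card G = Nat.card H * Nat.card f.ker := by
    simpa using card_preimage Set.univ
  rw [card_preimage, card_domain]
  ring

section RandomMatrix

variable {ι κ R : Type*} [Fintype κ]

theorem mulVec_left_surjective [Semiring R] {x : κ → R} {j : κ} (hx : IsUnit (x j)) :
    Function.Surjective fun A : Matrix ι κ R ↦ A *ᵥ x := by
  classical
  obtain ⟨u, hu⟩ := hx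
  refine fun y ↦ ⟨vecMulVec y (Pi.single j ↑u⁻¹), ?_⟩
  ext i
  simp [vecMulVec_mulVec, ← hu]

theorem ncard_setOf_mulVec_mem_mul_card [Ring R] {x : κ → R} {j : κ}
    (hx : IsUnit (x j)) (S : Set (ι → R)) :
    {A : Matrix ι κ R | A *ᵥ x ∈ S}.ncard * Nat.card (ι → R) =
      Nat.card (Matrix ι κ R) * S.ncard :=
  ncard_preimage_mul_card_of_surjective (f := mulVec.addMonoidHomLeft x)
    (mulVec_left_surjective hx) S

theorem ncard_setOf_exists_mulVec_mem_mul_card_le [Ring R] (T : Finset (κ → R))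
    (hT : ∀ x ∈ T, ∃ j, IsUnit (x j)) (S : Set (ι → R)) :
    {A : Matrix ι κ R | ∃ x ∈ T, A *ᵥ x ∈ S}.ncard * Nat.card (ι → R) ≤
      Nat.card (Matrix ι κ R) * (T.card * S.ncard) := by
  have union_eq : {A : Matrix ι κ R | ∃ x ∈ T, A *ᵥ x ∈ S} = ⋃ x ∈ T, {A | A *ᵥ x ∈ S} := by
    ext; simp
  calc {A : Matrix ι κ R | ∃ x ∈ T, A *ᵥ x ∈ S}.ncard * Nat.card (ι → R)
      ≤ (∑ x ∈ T, {A : Matrix ι κ R | A *ᵥ x ∈ S}.ncard) * Nat.card (ι → R) := by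
        rw [union_eq]
        gcongr
        exact T.set_ncard_biUnion_le _
    _ = ∑ _x ∈ T, Nat.card (Matrix ι κ R) * S.ncard := by
        rw [Finset.sum_mul]
        refine Finset.sum_congr rfl fun x hx ↦ ?_
        obtain ⟨j, hj⟩ := hT x hx
        exact ncard_setOf_mulVec_mem_mul_card hj S
    _ = Nat.card (Matrix ι κ R) * (T.card * S.ncard) := by
        rw [Finset.sum_const, smul_eq_mul]
        ring

end RandomMatrix

section Box

variable {K : Type*} [Ring K] [LinearOrder K] [IsStrictOrderedRing K] [FloorRing K]

theorem setOf_forall_abs_intCast_le (ι : Type*) (B : K) :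
    {y : ι → ℤ | ∀ i, |(y i : K)| ≤ B} = Set.Icc (fun _ ↦ -⌊B⌋) (fun _ ↦ ⌊B⌋) := by
  ext y
  simp [Set.mem_Icc, Pi.le_def, abs_le, Int.le_floor, neg_le, forall_and]

theorem ncard_setOf_forall_abs_intCast_le (ι : Type*) [Fintype ι] {B : K} (hB : 0 ≤ B) :
    ({y : ι → ℤ | ∀ i, |(y i : K)| ≤ B}.ncard : K) ≤ (2 * B + 1) ^ Fintype.card ι := by
  classical
  have floor_nonneg : 0 ≤ ⌊B⌋ := Int.floor_nonneg.2 hB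
  have card_interval : ((⌊B⌋ + 1 - -⌊B⌋).toNat : ℤ) = 2 * ⌊B⌋ + 1 := by lia
  rw [setOf_forall_abs_intCast_le, ← Finset.coe_Icc, Set.ncard_coe_finset, Pi.card_Icc]
  simp only [Int.card_Icc, Finset.prod_const, Finset.card_univ, Nat.cast_pow]
  rw [← Int.cast_natCast, card_interval]
  push_cast
  have : (0 : K) ≤ ⌊B⌋ := Int.cast_nonneg floor_nonneg
  gcongr
  exact Int.floor_le B

end Box

section QaryLattice

variable {ι κ : Type*} [Fintype κ] {q : ℕ}

/-- The `q`-ary lattice `Λ_q(A)` of the integer vectors whose residues modulo `q` lie in the column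
space of `A`, encoded as the preimage of the range of `x ↦ A x` under reduction modulo `q`. -/
def qaryLattice (A : Matrix ι κ (ZMod q)) : AddSubgroup (ι → ℤ) :=
  A.mulVecLin.range.toAddSubgroup.comap ((Int.castAddHom (ZMod q)).compLeft ι)

theorem mem_qaryLattice {A : Matrix ι κ (ZMod q)} {y : ι → ℤ} :
    y ∈ qaryLattice A ↔ ∃ x, (fun i ↦ (y i : ZMod q)) = A *ᵥ x :=
  exists_congr fun _ ↦ eq_comm

theorem eq_zero_of_intCast_eq_zero_of_abs_lt {y : ι → ℤ} (hyq : ∀ i, |y i| < q)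
    (hy : (fun i ↦ (y i : ZMod q)) = 0) : y = 0 :=
  funext fun i ↦
    Int.eq_zero_of_abs_lt_dvd ((ZMod.intCast_zmod_eq_zero_iff_dvd _ _).1 (congrFun hy i)) (hyq i)

theorem ncard_setOf_exists_mem_qaryLattice_mul_pow_le [Fact q.Prime] [Fintype ι]
    {S : Set (ι → ℤ)} (hS : S.Finite) (hS0 : ∀ y ∈ S, (fun i ↦ (y i : ZMod q)) ≠ 0) :
    {A : Matrix ι κ (ZMod q) | ∃ y ∈ S, y ∈ qaryLattice A}.ncard * q ^ Fintype.card ι ≤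
      Nat.card (Matrix ι κ (ZMod q)) * (q ^ Fintype.card κ * S.ncard) := by
  classical
  let residues : Set (ι → ZMod q) := (fun y i ↦ (y i : ZMod q)) '' S
  let nonzero : Finset (κ → ZMod q) := {x | x ≠ 0}
  have exists_isUnit : ∀ x ∈ nonzero, ∃ j, IsUnit (x j) := fun x hx ↦ by
    simpa [nonzero, Function.ne_iff] using hx
  have card_nonzero : nonzero.card ≤ q ^ Fintype.card κ := by
    simpa using nonzero.card_le_univ
  have subset : {A : Matrix ι κ (ZMod q) | ∃ y ∈ S, y ∈ qaryLattice A} ⊆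
      {A | ∃ x ∈ nonzero, A *ᵥ x ∈ residues} := by
    rintro A ⟨y, hy, hyA⟩
    obtain ⟨x, hx⟩ := mem_qaryLattice.1 hyA
    refine ⟨x, ?_, y, hy, hx⟩
    have : x ≠ 0 := by
      rintro rfl
      exact hS0 y hy (hx.trans (mulVec_zero A))
    simpa [nonzero] using this
  calc {A : Matrix ι κ (ZMod q) | ∃ y ∈ S, y ∈ qaryLattice A}.ncard * q ^ Fintype.card ι
      ≤ {A : Matrix ι κ (ZMod q) | ∃ x ∈ nonzero, A *ᵥ x ∈ residues}.ncard *
          Nat.card (ι → ZMod q) := by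
        rw [Nat.card_fun, Nat.card_zmod, Nat.card_eq_fintype_card]
        gcongr
        exact Set.toFinite _
    _ ≤ Nat.card (Matrix ι κ (ZMod q)) * (nonzero.card * residues.ncard) :=
        ncard_setOf_exists_mulVec_mem_mul_card_le nonzero exists_isUnit residues
    _ ≤ Nat.card (Matrix ι κ (ZMod q)) * (q ^ Fintype.card κ * S.ncard) := by
        gcongr
        exact Set.ncard_image_le hS

theorem ncard_setOf_exists_abs_le_mul_pow_le [Fact q.Prime] [Fintype ι] {B : ℝ} (hB0 : 0 ≤ B)
    (hBq : B < q) :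
    ({A : Matrix ι κ (ZMod q) |
        ∃ y : ι → ℤ, y ≠ 0 ∧ (∀ i, |(y i : ℝ)| ≤ B) ∧ y ∈ qaryLattice A}.ncard : ℝ) *
        q ^ Fintype.card ι ≤
      Nat.card (Matrix ι κ (ZMod q)) *
        (q ^ Fintype.card κ * (2 * B + 1) ^ Fintype.card ι) := by
  let box : Set (ι → ℤ) := {y | ∀ i, |(y i : ℝ)| ≤ B}
  have box_finite : box.Finite := by
    classical
    simpa only [box, setOf_forall_abs_intCast_le] using Set.finite_Icc _ _
  have residue_ne_zero : ∀ y ∈ box \ {0}, (fun i ↦ (y i : ZMod q)) ≠ 0 := fun y hy hy0 ↦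
    hy.2 <| eq_zero_of_intCast_eq_zero_of_abs_lt
      (fun i ↦ by exact_mod_cast (hy.1 i).trans_lt hBq) hy0
  have event_eq : {A : Matrix ι κ (ZMod q) |
      ∃ y : ι → ℤ, y ≠ 0 ∧ (∀ i, |(y i : ℝ)| ≤ B) ∧ y ∈ qaryLattice A} =
      {A | ∃ y ∈ box \ {0}, y ∈ qaryLattice A} := by
    ext A
    exact exists_congr fun y ↦ by simp [box, and_assoc, and_left_comm]
  calc _ ≤ (Nat.card (Matrix ι κ (ZMod q)) *
        (q ^ Fintype.card κ * (box \ {0}).ncard) : ℝ) := by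
        rw [event_eq]
        exact_mod_cast ncard_setOf_exists_mem_qaryLattice_mul_pow_le (κ := κ)
          box_finite.sdiff residue_ne_zero
    _ ≤ Nat.card (Matrix ι κ (ZMod q)) *
        (q ^ Fintype.card κ * (2 * B + 1) ^ Fintype.card ι) := by
        gcongr
        have : (box \ {0}).ncard ≤ box.ncard := Set.ncard_le_ncard Set.sdiff_subset box_finite
        exact (Nat.cast_le.2 this).trans (ncard_setOf_forall_abs_intCast_le ι hB0)

theorem qary_lattice_linf_min_general [Fact q.Prime] [Fintype ι] {B : ℝ} (hB0 : 0 ≤ B) :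
    (Nat.card {A : Matrix ι κ (ZMod q) //
        ∃ y : ι → ℤ, y ≠ 0 ∧ (∀ i, |(y i : ℝ)| ≤ B) ∧ y ∈ qaryLattice A} : ℝ) /
        Nat.card (Matrix ι κ (ZMod q)) ≤
      (q : ℝ) ^ Fintype.card κ / (q : ℝ) ^ Fintype.card ι * (2 * B + 1) ^ Fintype.card ι := by
  have hq : (1 : ℝ) ≤ q := by exact_mod_cast (Fact.out : q.Prime).one_le
  rcases lt_or_ge B q with hBq | hqB
  · have hM : (0 : ℝ) < Nat.card (Matrix ι κ (ZMod q)) := by exact_mod_cast Nat.card_pos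
    rw [div_mul_eq_mul_div, div_le_div_iff₀ hM (by positivity), mul_comm (_ * _)]
    exact ncard_setOf_exists_abs_le_mul_pow_le hB0 hBq
  · calc _ ≤ (1 : ℝ) :=
          div_le_one_of_le₀ (by exact_mod_cast Finite.card_subtype_le _) (Nat.cast_nonneg _)
      _ ≤ (q : ℝ) ^ Fintype.card κ := one_le_pow₀ hq
      _ = (q : ℝ) ^ Fintype.card κ / (q : ℝ) ^ Fintype.card ι * (q : ℝ) ^ Fintype.card ι := by
          field_simp
      _ ≤ _ := by
          gcongr
          linarith

end QaryLattice

/-- **Minimum of a random q-ary lattice in ℓ∞ norm** (precise form of the first claim of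
the paper's Lemma 2.7). For a uniform `A ∈ (ℤ/qℤ)^{m×n}`, the probability that the q-ary
lattice `Λ_q(A) = {y ∈ ℤ^m : y ≡ Ax (mod q) for some x}` contains a nonzero vector `y`
with `‖y‖_∞ ≤ B` is at most `q^{n−m} (2B+1)^m`, whenever `0 ≤ B < q/2`. -/
theorem qary_lattice_linf_min (q m n : ℕ) (hq : q.Prime) (hm : 1 ≤ m) (hn : 1 ≤ n)
    (B : ℝ) (hB0 : 0 ≤ B) (hBq : B < (q : ℝ) / 2) :
    ((Nat.card {A : Matrix (Fin m) (Fin n) (ZMod q) //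
        ∃ y : Fin m → ℤ, y ≠ 0 ∧ (∀ i, |(y i : ℝ)| ≤ B) ∧
          ∃ x : Fin n → ZMod q, (fun i => (y i : ZMod q)) = A.mulVec x} : ℝ)
        / (Nat.card (Matrix (Fin m) (Fin n) (ZMod q)) : ℝ))
      ≤ (q : ℝ)^n / (q : ℝ)^m * (2 * B + 1)^m := by
  have : Fact q.Prime := ⟨hq⟩
  simpa only [mem_qaryLattice, Fintype.card_fin] using
    qary_lattice_linf_min_general (ι := Fin m) (κ := Fin n) (q := q) hB0
end

section
/- Let q, n, m, k, c be positive integers with c ≥ 8, let A ∈ (ℤ/qℤ)^{m×n}, write λ = λ₁^∞(Λ_q(A)) and z = q/c, and assume z ≤ λ/2. Let x ∈ (ℤ/qℤ)ⁿ, let ū ∈ {0,1,…,q−1}^m be the coordinatewise lift of Ax, and let e₁, e₂ ∈ ℝ^m satisfy ‖e₁‖_∞ ≤ λ/(2ck) and ‖e₂‖_∞ ≤ λ/(2ck); set u = ū + e₁ and v = ū + e₂. For w ∈ [0,1)^m define g_w(y) = (⌊(y_i/z − w_i) mod c⌋)_{i=1,…,m}, where t mod c denotes the representative of t in [0,c).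 Then the Lebesgue measure of {w ∈ [0,1)^m : g_w(u) = g_w(v)} is at least (1 − 1/k)^m. -/
open MeasureTheory

/-- `y ∈ ℤ^m` belongs to the q-ary lattice `Λ_q(A) = {y : y ≡ Ax (mod q) for some x}`. -/
def inQaryLattice {q m n : ℕ} (A : Matrix (Fin m) (Fin n) (ZMod q)) (y : Fin m → ℤ) : Prop :=
  ∃ x : Fin n → ZMod q, (fun i => (y i : ZMod q)) = A.mulVec x

/-- The ℓ∞ norm of an integer vector, as a real number. -/
def intLinfNorm {m : ℕ} (y : Fin m → ℤ) : ℝ :=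
  ((Finset.univ.sup fun i => (y i).natAbs : ℕ) : ℝ)

/-- `λ₁^∞(Λ_q(A))`: the least ℓ∞ norm of a nonzero vector of the q-ary lattice. -/
noncomputable def lambdaOneInf {q m n : ℕ} (A : Matrix (Fin m) (Fin n) (ZMod q)) : ℝ :=
  sInf {t : ℝ | ∃ y : Fin m → ℤ, y ≠ 0 ∧ inQaryLattice A y ∧ t = intLinfNorm y}

/-- `t mod c`: the representative of the real number `t` modulo `c` lying in `[0, c)`. -/
noncomputable def rmod (t c : ℝ) : ℝ := t - c * ⌊t / c⌋

/-!
Each `q eᵢ` lies in `Λ_q(A)`, so `λ₁^∞(Λ_q(A)) ≤ q` and the two rescaled points `u / z`, `v / z` are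
within `1 / k` of each other in every coordinate. The coordinates of the shift are independent, and
by periodicity the `i`-th one may be drawn from a unit interval ending at the larger of `uᵢ / z` and
`vᵢ / z`; then the two unreduced floors differ exactly when it lands between these two numbers,
which has probability at most `1 / k`. Reducing the floors modulo `c` only helps.
-/

section QaryLattice

variable {q m n : ℕ}

theorem lambdaOneInf_le_intLinfNorm (A : Matrix (Fin m) (Fin n) (ZMod q)) {y : Fin m → ℤ}
    (hy : y ≠ 0) (hyA : inQaryLattice A y) : lambdaOneInf A ≤ intLinfNorm y := by
  refine csInf_le ⟨0, ?_⟩ ⟨y, hy, hyA, rfl⟩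
  rintro _ ⟨y', -, -, rfl⟩
  exact Nat.cast_nonneg _

theorem inQaryLattice_of_forall_dvd (A : Matrix (Fin m) (Fin n) (ZMod q)) {y : Fin m → ℤ}
    (hy : ∀ i, (q : ℤ) ∣ y i) : inQaryLattice A y := by
  refine ⟨0, ?_⟩
  rw [Matrix.mulVec_zero]
  exact funext fun i => (ZMod.intCast_zmod_eq_zero_iff_dvd (y i) q).mpr (hy i)

theorem intLinfNorm_eq_norm (y : Fin m → ℤ) : intLinfNorm y = ‖y‖ := by
  rw [intLinfNorm, Pi.norm_def, ← NNReal.coe_natCast, Nat.cast_finsetSup]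
  simp only [NNReal.natCast_natAbs]

theorem lambdaOneInf_le_modulus [Nonempty (Fin m)] (hq : 0 < q)
    (A : Matrix (Fin m) (Fin n) (ZMod q)) : lambdaOneInf A ≤ q := by
  obtain ⟨i⟩ := ‹Nonempty (Fin m)›
  have hne : (Pi.single i (q : ℤ) : Fin m → ℤ) ≠ 0 := by
    simpa only [ne_eq, Pi.single_eq_zero_iff, Nat.cast_eq_zero] using hq.ne'
  have hmem : inQaryLattice A (Pi.single i (q : ℤ)) :=
    inQaryLattice_of_forall_dvd A fun j => by
      rcases eq_or_ne j i with rfl | hji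
      · rw [Pi.single_eq_same]
      · rw [Pi.single_eq_of_ne hji]
        exact dvd_zero _
  calc lambdaOneInf A ≤ intLinfNorm (Pi.single i (q : ℤ)) := lambdaOneInf_le_intLinfNorm A hne hmem
    _ = q := by rw [intLinfNorm_eq_norm, Pi.norm_single, Int.norm_natCast]

end QaryLattice

theorem floor_rmod_natCast (t : ℝ) (c : ℕ) : ⌊rmod t c⌋ = ⌊t⌋ % c := by
  have hcast : (c : ℝ) * ((⌊t⌋ / (c : ℤ) : ℤ) : ℝ) = ((c * (⌊t⌋ / c) : ℤ) : ℝ) := by push_cast; rfl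
  rw [rmod, Int.floor_div_natCast, hcast, Int.floor_sub_intCast, Int.emod_def]

theorem volume_inter_Ioc_eq_of_periodic {s : Set ℝ} (hs : MeasurableSet s) {T : ℝ} (hT : 0 < T)
    (hper : Function.Periodic (· ∈ s) T) (a b : ℝ) :
    volume (s ∩ Set.Ioc a (a + T)) = volume (s ∩ Set.Ioc b (b + T)) :=
  (isAddFundamentalDomain_Ioc hT a).measure_set_eq (isAddFundamentalDomain_Ioc hT b) hs
    fun g => Set.ext fun x => iff_of_eq (hper.map_vadd_zmultiples g x)

theorem floor_sub_eq_floor_sub_iff_le {R : Type*} [Ring R] [LinearOrder R] [IsStrictOrderedRing R]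
    [FloorRing R] {a b w : R} (hab : a ≤ b) (hw : w ∈ Set.Ioc (b - 1) b) :
    ⌊a - w⌋ = ⌊b - w⌋ ↔ w ≤ a := by
  have hlt : b - w < 1 := sub_lt_comm.mp hw.1
  have hb : ⌊b - w⌋ = 0 := Int.floor_eq_zero_iff.mpr ⟨sub_nonneg.mpr hw.2, hlt⟩
  rw [hb, Int.floor_eq_zero_iff, Set.mem_Ico, sub_nonneg]
  exact and_iff_left ((sub_le_sub_right hab w).trans_lt hlt)

theorem volume_floor_sub_eq_floor_sub (a b : ℝ) :
    volume {w : ℝ | w ∈ Set.Ico (0 : ℝ) 1 ∧ ⌊a - w⌋ = ⌊b - w⌋} =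
      ENNReal.ofReal (1 - |a - b|) := by
  wlog hab : a ≤ b generalizing a b
  · simpa only [eq_comm, abs_sub_comm] using this b a (le_of_not_ge hab)
  set s : Set ℝ := {w | ⌊a - w⌋ = ⌊b - w⌋} with hs
  have hs_meas : MeasurableSet s := measurableSet_eq_fun (by fun_prop) (by fun_prop)
  have hs_per : Function.Periodic (· ∈ s) 1 := fun w => by
    simp only [hs, Set.mem_ofPred_eq, ← sub_sub, Int.floor_sub_one, sub_left_inj]
  have hs_Ioc : s ∩ Set.Ioc (b - 1) b = Set.Ioc (b - 1) a := by
    ext w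
    refine ⟨fun ⟨hws, hw⟩ => ⟨hw.1, (floor_sub_eq_floor_sub_iff_le hab hw).mp hws⟩, fun hw => ?_⟩
    have hw' : w ∈ Set.Ioc (b - 1) b := ⟨hw.1, hw.2.trans hab⟩
    exact ⟨(floor_sub_eq_floor_sub_iff_le hab hw').mpr hw.2, hw'⟩
  calc volume (Set.Ico 0 1 ∩ s)
      = volume (s ∩ Set.Ioc 0 1) := by
        rw [Set.inter_comm]
        exact measure_congr (Filter.EventuallyEq.rfl.inter Ico_ae_eq_Ioc)
    _ = volume (s ∩ Set.Ioc (b - 1) b) := by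
        simpa only [zero_add, sub_add_cancel] using
          volume_inter_Ioc_eq_of_periodic hs_meas one_pos hs_per 0 (b - 1)
    _ = ENNReal.ofReal (1 - |a - b|) := by
        rw [hs_Ioc, Real.volume_Ioc, abs_of_nonpos (sub_nonpos.mpr hab)]
        ring_nf

theorem volume_pi_floor_sub_eq_floor_sub {ι : Type*} [Fintype ι] (a b : ι → ℝ) :
    volume {w : ι → ℝ | (∀ i, w i ∈ Set.Ico (0 : ℝ) 1) ∧ ∀ i, ⌊a i - w i⌋ = ⌊b i - w i⌋} =
      ∏ i, ENNReal.ofReal (1 - |a i - b i|) := by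
  have hpi : {w : ι → ℝ | (∀ i, w i ∈ Set.Ico (0 : ℝ) 1) ∧ ∀ i, ⌊a i - w i⌋ = ⌊b i - w i⌋} =
      Set.univ.pi fun i => {t : ℝ | t ∈ Set.Ico (0 : ℝ) 1 ∧ ⌊a i - t⌋ = ⌊b i - t⌋} := by
    ext w
    simp only [Set.mem_ofPred_eq, Set.mem_univ_pi, forall_and]
  simp only [hpi, volume_pi_pi, volume_floor_sub_eq_floor_sub]

theorem ofReal_pow_le_volume_floor_rmod_eq {ι : Type*} [Fintype ι] {a b : ι → ℝ} {d : ℝ}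
    (hd : d ≤ 1) (hab : ∀ i, |a i - b i| ≤ d) (c : ℕ) :
    ENNReal.ofReal ((1 - d) ^ Fintype.card ι) ≤
      volume {w : ι → ℝ | (∀ i, w i ∈ Set.Ico (0 : ℝ) 1) ∧
        ∀ i, ⌊rmod (a i - w i) c⌋ = ⌊rmod (b i - w i) c⌋} :=
  calc ENNReal.ofReal ((1 - d) ^ Fintype.card ι)
      = ∏ _i : ι, ENNReal.ofReal (1 - d) := by
        rw [ENNReal.ofReal_pow (sub_nonneg.mpr hd), Finset.prod_const, Finset.card_univ]
    _ ≤ ∏ i, ENNReal.ofReal (1 - |a i - b i|) :=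
        Finset.prod_le_prod' fun i _ => ENNReal.ofReal_le_ofReal (sub_le_sub_left (hab i) 1)
    _ = volume {w : ι → ℝ | (∀ i, w i ∈ Set.Ico (0 : ℝ) 1) ∧ ∀ i, ⌊a i - w i⌋ = ⌊b i - w i⌋} :=
        (volume_pi_floor_sub_eq_floor_sub a b).symm
    _ ≤ volume {w : ι → ℝ | (∀ i, w i ∈ Set.Ico (0 : ℝ) 1) ∧
          ∀ i, ⌊rmod (a i - w i) c⌋ = ⌊rmod (b i - w i) c⌋} := by
        refine measure_mono fun w ⟨hw_cube, hw_floor⟩ => ⟨hw_cube, fun i => ?_⟩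
        rw [floor_rmod_natCast, floor_rmod_natCast, hw_floor i]

theorem cube_separation_same_cell_general {q n m c : ℕ} {k : ℝ} (hq : 0 < q) (hk : 1 ≤ k)
    (hc : 0 < c) (A : Matrix (Fin m) (Fin n) (ZMod q)) {z : ℝ} (hz : z = (q : ℝ) / c)
    {p u v : Fin m → ℝ} (hu : ∀ i, |u i - p i| ≤ lambdaOneInf A / (2 * c * k))
    (hv : ∀ i, |v i - p i| ≤ lambdaOneInf A / (2 * c * k)) :
    ENNReal.ofReal ((1 - 1 / k) ^ m)
      ≤ volume {w : Fin m → ℝ |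
          (∀ i, w i ∈ Set.Ico (0 : ℝ) 1) ∧
          ∀ i, ⌊rmod (u i / z - w i) c⌋ = ⌊rmod (v i / z - w i) c⌋} := by
  have hk_pos : 0 < k := one_pos.trans_le hk
  have hz_pos : 0 < z := by rw [hz]; positivity
  have hclose (i : Fin m) : |u i / z - v i / z| ≤ 1 / k := by
    have : Nonempty (Fin m) := ⟨i⟩
    rw [← sub_div, abs_div, abs_of_pos hz_pos, div_le_iff₀ hz_pos]
    calc |u i - v i|
        ≤ |u i - p i| + |p i - v i| := abs_sub_le _ _ _
      _ ≤ lambdaOneInf A / (2 * c * k) + lambdaOneInf A / (2 * c * k) :=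
          add_le_add (hu i) (abs_sub_comm (p i) (v i) ▸ hv i)
      _ ≤ q / (2 * c * k) + q / (2 * c * k) := by gcongr <;> exact lambdaOneInf_le_modulus hq A
      _ = 1 / k * z := by rw [hz]; field_simp; norm_num
  simpa only [Fintype.card_fin] using
    ofReal_pow_le_volume_floor_rmod_eq ((div_le_one hk_pos).mpr hk) hclose c

/-- **Cube separation, first claim** (paper's Lemma 3.2): two points obtained by
perturbing the same lattice point `Ax` by errors of ℓ∞ norm at most `λ/(2ck)` fall into
the same randomly shifted grid cell with probability at least `(1 − 1/k)^m` over the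
uniform shift `w ∈ [0,1)^m`. -/
theorem cube_separation_same_cell
    (q n m k c : ℕ) (hq : 1 ≤ q) (hn : 1 ≤ n) (hm : 1 ≤ m) (hk : 1 ≤ k) (hc : 8 ≤ c)
    (A : Matrix (Fin m) (Fin n) (ZMod q))
    (lam z : ℝ) (hlam : lam = lambdaOneInf A)
    (hz : z = (q : ℝ) / c) (hzlam : z ≤ lam / 2)
    (x : Fin n → ZMod q)
    (e₁ e₂ : Fin m → ℝ)
    (he₁ : ∀ i, |e₁ i| ≤ lam / (2 * c * k)) (he₂ : ∀ i, |e₂ i| ≤ lam / (2 * c * k))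
    (u v : Fin m → ℝ)
    (hu : ∀ i, u i = ((A.mulVec x i).val : ℝ) + e₁ i)
    (hv : ∀ i, v i = ((A.mulVec x i).val : ℝ) + e₂ i) :
    ENNReal.ofReal ((1 - 1 / (k : ℝ))^m)
      ≤ volume {w : Fin m → ℝ |
          (∀ i, w i ∈ Set.Ico (0 : ℝ) 1) ∧
          ∀ i, ⌊rmod (u i / z - w i) c⌋ = ⌊rmod (v i / z - w i) c⌋} := by
  subst hlam hz
  exact cube_separation_same_cell_general (p := fun i => ((A.mulVec x i).val : ℝ)) hq
    (mod_cast hk) (by lia) A rfl (by simpa [hu] using he₁) (by simpa [hv] using he₂)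
end

section
/- Let q, n, m, k, c be positive integers with c ≥ 8, let A ∈ (ℤ/qℤ)^{m×n}, write λ = λ₁^∞(Λ_q(A)) and z = q/c, and assume z ≤ λ/2. Let x, x̂ ∈ (ℤ/qℤ)ⁿ with Ax ≠ Ax̂, let ū, v̄ ∈ {0,1,…,q−1}^m be the coordinatewise lifts of Ax and Ax̂ respectively, and let e₁, e₂ ∈ ℝ^m satisfy ‖e₁‖_∞ ≤ λ/(2ck) and ‖e₂‖_∞ ≤ λ/(2ck); set u = ū + e₁ and v = v̄ + e₂. Then for every w ∈ [0,1)^m there exists a coordinate i ∈ {1,…,m} with ⌊(u_i/z − w_i) mod c⌋ ≠ ⌊(v_i/z − w_i) mod c⌋, where t mod c denotes the representative of t in [0,c). -/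
/-!
Two points in the same grid cell have coordinates that differ, up to a multiple of `q`, by less
than the cell width `z`. If this held in every coordinate, then subtracting those multiples from the
difference of the two lattice points would give a vector of `Λ_q(A)` of norm less than
`z + λ/(ck) ≤ λ`. That vector is nonzero because `Ax` and `Axhat` differ modulo `q`, which
contradicts the minimality of `λ`.
-/

section

variable {q m n : ℕ} {A : Matrix (Fin m) (Fin n) (ZMod q)}

theorem exists_lambdaOneInf_le_abs {y : Fin m → ℤ} (hy : inQaryLattice A y) (hy₀ : y ≠ 0) :
    ∃ i, lambdaOneInf A ≤ |(y i : ℝ)| := by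
  obtain ⟨j, -⟩ := Function.ne_iff.mp hy₀
  obtain ⟨i, -, hi⟩ := Finset.exists_mem_eq_sup Finset.univ ⟨j, Finset.mem_univ j⟩
    fun i => (y i).natAbs
  have bddBelow : BddBelow {t : ℝ | ∃ y, y ≠ 0 ∧ inQaryLattice A y ∧ t = intLinfNorm y} := by
    refine ⟨0, ?_⟩
    rintro _ ⟨y', -, -, rfl⟩
    exact Nat.cast_nonneg _
  refine ⟨i, ?_⟩
  calc lambdaOneInf A ≤ intLinfNorm y := csInf_le bddBelow ⟨y, hy₀, hy, rfl⟩
    _ = |(y i : ℝ)| := by rw [intLinfNorm, hi, Nat.cast_natAbs, Int.cast_abs]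

theorem exists_lambdaOneInf_le_abs_sub_sub_mul {x xhat : Fin n → ZMod q}
    (hxx : A.mulVec x ≠ A.mulVec xhat) {a b : Fin m → ℤ}
    (ha : ∀ i, (a i : ZMod q) = A.mulVec x i) (hb : ∀ i, (b i : ZMod q) = A.mulVec xhat i)
    (N : Fin m → ℤ) :
    ∃ i, lambdaOneInf A ≤ |(a i : ℝ) - b i - q * N i| := by
  let y : Fin m → ℤ := fun i => a i - b i - q * N i
  have cast_y : (fun i => (y i : ZMod q)) = A.mulVec x - A.mulVec xhat := by
    funext i
    simp [y, ha, hb]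
  have y_mem : inQaryLattice A y := ⟨x - xhat, by rw [cast_y, Matrix.mulVec_sub]⟩
  have y_ne_zero : y ≠ 0 := by
    intro hy
    refine hxx (sub_eq_zero.mp ?_)
    rw [← cast_y, hy]
    exact funext fun _ => Int.cast_zero
  simpa [y] using exists_lambdaOneInf_le_abs y_mem y_ne_zero

theorem exists_int_abs_sub_sub_mul_lt_one_of_floor_rmod_eq {s t c : ℝ}
    (h : ⌊rmod s c⌋ = ⌊rmod t c⌋) : ∃ N : ℤ, |s - t - c * N| < 1 := by
  refine ⟨⌊s / c⌋ - ⌊t / c⌋, ?_⟩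
  have rmod_sub_rmod : s - t - c * ((⌊s / c⌋ - ⌊t / c⌋ : ℤ) : ℝ) = rmod s c - rmod t c := by
    rw [rmod, rmod]
    push_cast
    ring
  rw [rmod_sub_rmod]
  exact Int.abs_sub_lt_one_of_floor_eq_floor h

theorem exists_int_abs_sub_sub_mul_lt_of_floor_rmod_div_sub_eq {u v w z c : ℝ} (hz : 0 < z)
    (h : ⌊rmod (u / z - w) c⌋ = ⌊rmod (v / z - w) c⌋) :
    ∃ N : ℤ, |u - v - c * z * N| < z := by
  obtain ⟨N, hN⟩ := exists_int_abs_sub_sub_mul_lt_one_of_floor_rmod_eq h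
  refine ⟨N, ?_⟩
  calc |u - v - c * z * N| = |z * (u / z - w - (v / z - w) - c * N)| := by
        congr 1
        field_simp
        ring
    _ = z * |u / z - w - (v / z - w) - c * N| := by rw [abs_mul, abs_of_pos hz]
    _ < z := mul_lt_of_lt_one_right hz hN

theorem cube_separation_distinct_cells_general {c z ε₁ ε₂ : ℝ} (hz : 0 < z)
    (hcz : c * z = q) (hε : z + ε₁ + ε₂ ≤ lambdaOneInf A) {x xhat : Fin n → ZMod q}
    (hxx : A.mulVec x ≠ A.mulVec xhat) {a b : Fin m → ℤ}
    (ha : ∀ i, (a i : ZMod q) = A.mulVec x i) (hb : ∀ i, (b i : ZMod q) = A.mulVec xhat i)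
    {u v : Fin m → ℝ} (hu : ∀ i, |u i - a i| ≤ ε₁) (hv : ∀ i, |v i - b i| ≤ ε₂)
    (w : Fin m → ℝ) :
    ∃ i, ⌊rmod (u i / z - w i) c⌋ ≠ ⌊rmod (v i / z - w i) c⌋ := by
  by_contra! same_cells
  choose N hN using fun i =>
    exists_int_abs_sub_sub_mul_lt_of_floor_rmod_div_sub_eq hz (same_cells i)
  obtain ⟨i, hi⟩ := exists_lambdaOneInf_le_abs_sub_sub_mul hxx ha hb N
  refine hi.not_gt ?_
  calc |(a i : ℝ) - b i - q * N i|
      = |u i - v i - c * z * N i - (u i - a i) + (v i - b i)| := by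
        rw [hcz]
        congr 1
        ring
    _ ≤ |u i - v i - c * z * N i| + |u i - a i| + |v i - b i| :=
        (abs_add_le _ _).trans (add_le_add_left (abs_sub _ _) _)
    _ < z + ε₁ + ε₂ := add_lt_add_of_lt_of_le (add_lt_add_of_lt_of_le (hN i) (hu i)) (hv i)
    _ ≤ lambdaOneInf A := hε

end

/-- **Cube separation, second claim** (paper's Lemma 3.2): points obtained from distinct
lattice points `Ax ≠ Axhat` by perturbations of ℓ∞ norm at most `λ/(2ck)` always fall into
distinct grid cells, for every grid shift `w ∈ [0,1)^m`. -/
theorem cube_separation_distinct_cells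
    (q n m k c : ℕ) (hq : 1 ≤ q) (hn : 1 ≤ n) (hm : 1 ≤ m) (hk : 1 ≤ k) (hc : 8 ≤ c)
    (A : Matrix (Fin m) (Fin n) (ZMod q))
    (lam z : ℝ) (hlam : lam = lambdaOneInf A)
    (hz : z = (q : ℝ) / c) (hzlam : z ≤ lam / 2)
    (x xhat : Fin n → ZMod q) (hxx : A.mulVec x ≠ A.mulVec xhat)
    (e₁ e₂ : Fin m → ℝ)
    (he₁ : ∀ i, |e₁ i| ≤ lam / (2 * c * k)) (he₂ : ∀ i, |e₂ i| ≤ lam / (2 * c * k))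
    (u v : Fin m → ℝ)
    (hu : ∀ i, u i = ((A.mulVec x i).val : ℝ) + e₁ i)
    (hv : ∀ i, v i = ((A.mulVec xhat i).val : ℝ) + e₂ i)
    (w : Fin m → ℝ) (hw : ∀ i, w i ∈ Set.Ico (0 : ℝ) 1) :
    ∃ i, ⌊rmod (u i / z - w i) c⌋ ≠ ⌊rmod (v i / z - w i) c⌋ := by
  have c_pos : (0 : ℝ) < c := by exact_mod_cast (show 0 < c by omega)
  have z_pos : 0 < z := hz ▸ div_pos (by exact_mod_cast hq) c_pos
  have four_le : (4 : ℝ) ≤ 2 * c * k := by exact_mod_cast (show 4 ≤ 2 * c * k by nlinarith)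
  have : NeZero q := ⟨by omega⟩
  have noise_le : lam / (2 * c * k) ≤ lam / 4 :=
    div_le_div_of_nonneg_left (by linarith) four_pos four_le
  exact cube_separation_distinct_cells_general (a := fun i => ((A.mulVec x i).val : ℤ))
    (b := fun i => ((A.mulVec xhat i).val : ℤ)) z_pos (by rw [hz, mul_div_cancel₀ _ c_pos.ne'])
    (by linarith) hxx (by simp) (by simp)
    (by simpa [hu] using he₁) (by simpa [hv] using he₂) w
end

section
/- For every real r > 0, ∑_{n∈ℤ} exp(−π n²/(4r²)) ≤ 2 · ∑_{n∈ℤ} exp(−π n²/r²); equivalently, ρ_{2r}(ℤ) ≤ 2 ρ_r(ℤ). -/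
open Real

/-!
Poisson summation gives `ρ_r(ℤ) = r ρ_{1/r}(ℤ)`. Since `ρ_s(ℤ)` increases with `s`, the quotient
`ρ_r(ℤ) / r` decreases with `r`; hence widening the Gaussian by a factor `c ≥ 1` multiplies its
mass on `ℤ` by at most `c`.
-/

lemma summable_exp_neg_pi_mul_int_sq {a : ℝ} (ha : 0 < a) :
    Summable fun n : ℤ ↦ exp (-π * a * (n : ℝ) ^ 2) := by
  simpa only [add_zero, mul_right_comm] using (HurwitzZeta.hasSum_int_evenKernel 0 ha).summable

lemma antitoneOn_tsum_exp_neg_pi_mul_int_sq :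
    AntitoneOn (fun a : ℝ ↦ ∑' n : ℤ, exp (-π * a * (n : ℝ) ^ 2)) (Set.Ioi 0) := by
  intro a ha b hb hab
  refine Summable.tsum_le_tsum (fun n ↦ ?_) (summable_exp_neg_pi_mul_int_sq hb)
    (summable_exp_neg_pi_mul_int_sq ha)
  simp only [neg_mul]
  gcongr

lemma tsum_exp_neg_pi_mul_int_sq_div_sq {r : ℝ} (hr : 0 < r) :
    ∑' n : ℤ, exp (-π * (n : ℝ) ^ 2 / r ^ 2) = r * ∑' n : ℤ, exp (-π * r ^ 2 * (n : ℝ) ^ 2) := by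
  have sqrt_sq_eq : (r ^ 2) ^ (1 / 2 : ℝ) = r := by rw [← sqrt_eq_rpow, sqrt_sq hr.le]
  rw [Real.tsum_exp_neg_mul_int_sq (pow_pos hr 2), sqrt_sq_eq, ← mul_assoc,
    mul_one_div_cancel hr.ne', one_mul]
  simp only [div_mul_eq_mul_div]

theorem gaussian_mass_double_width_general {c r : ℝ} (hc : 1 ≤ c) (hr : 0 < r) :
    ∑' n : ℤ, exp (-π * (n : ℝ) ^ 2 / (c * r) ^ 2)
      ≤ c * ∑' n : ℤ, exp (-π * (n : ℝ) ^ 2 / r ^ 2) := by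
  have hcr : r ≤ c * r := le_mul_of_one_le_left hr.le hc
  have hcr_pos : 0 < c * r := hr.trans_le hcr
  calc ∑' n : ℤ, exp (-π * (n : ℝ) ^ 2 / (c * r) ^ 2)
      = c * r * ∑' n : ℤ, exp (-π * (c * r) ^ 2 * (n : ℝ) ^ 2) :=
        tsum_exp_neg_pi_mul_int_sq_div_sq hcr_pos
    _ ≤ c * r * ∑' n : ℤ, exp (-π * r ^ 2 * (n : ℝ) ^ 2) :=
        mul_le_mul_of_nonneg_left (antitoneOn_tsum_exp_neg_pi_mul_int_sq
          (pow_pos hr 2) (pow_pos hcr_pos 2) (pow_le_pow_left₀ hr.le hcr 2)) hcr_pos.le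
    _ = c * ∑' n : ℤ, exp (-π * (n : ℝ) ^ 2 / r ^ 2) := by
        rw [tsum_exp_neg_pi_mul_int_sq_div_sq hr, mul_assoc]

/-- `ρ_{2r}(ℤ) ≤ 2 ρ_r(ℤ)` (established via Poisson summation in the paper's proof of
Lemma 2.1): for every `r > 0`, `∑_{n∈ℤ} exp(−π n²/(4r²)) ≤ 2 ∑_{n∈ℤ} exp(−π n²/r²)`. -/
theorem gaussian_mass_double_width (r : ℝ) (hr : 0 < r) :
    (∑' n : ℤ, Real.exp (-π * (n : ℝ)^2 / (4 * r^2)))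
      ≤ 2 * ∑' n : ℤ, Real.exp (-π * (n : ℝ)^2 / r^2) := by
  rw [show 4 * r ^ 2 = (2 * r) ^ 2 by ring]
  exact gaussian_mass_double_width_general one_le_two hr
end

section
/- For every real s > 0, every real κ ≥ 0, and every integer m ≥ 1, ∑_{e∈ℤ^m, ‖e‖_∞ > √κ·s} exp(−π‖e‖₂²/s²) ≤ 2m·exp(−(3π/4)·κ) · (∑_{j∈ℤ} exp(−π j²/s²))^m. -/
open Real

/-!
Poisson summation turns `∑ j, ρ_s(j)` into `s * ∑ j, ρ_{1/s}(j)`, and `ρ_{1/s}` decreases in `s`,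
so widening the Gaussian from `s` to `c * s` multiplies its mass on `ℤ` by at most `c`. Where
`|x| ≥ r * s`, the narrow weight `ρ_s(x)` is at most `exp (-π * (1 - 1 / c ^ 2) * r ^ 2)` times the
wide weight `ρ_{cs}(x)`; this gives the one-dimensional tail. Since the weight on `ℤ^m` is a
product, a union bound over the coordinates finishes the argument. The constants `2` and `3 / 4`
come from the choice `c = 2`.
-/

section ProductSums

variable {ι : Type*} [Fintype ι] {α : ι → Type*} {𝕜 : Type*} [RCLike 𝕜]

theorem hasSum_prod_pi_fin {n : ℕ} {α : Fin n → Type*} {f : ∀ i, α i → 𝕜}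
    (hf : ∀ i, Summable (f i)) :
    HasSum (fun x : ∀ i, α i ↦ ∏ i, f i (x i)) (∏ i, ∑' a, f i a) := by
  induction n with
  | zero => simp
  | succ n ih =>
    have htail := ih fun i : Fin n ↦ hf i.succ
    have hsummable := summable_mul_of_summable_norm (hf 0).norm htail.summable.norm
    have hmul := (hf 0).hasSum.mul htail hsummable
    refine (Fin.consEquiv α).hasSum_iff.1 ?_
    convert! hmul using 2 with x
    · simp [Fin.consEquiv, Fin.prod_univ_succ]
    · exact Fin.prod_univ_succ _

theorem hasSum_prod_pi {f : ∀ i, α i → 𝕜} (hf : ∀ i, Summable (f i)) :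
    HasSum (fun x : ∀ i, α i ↦ ∏ i, f i (x i)) (∏ i, ∑' a, f i a) := by
  let e := (Fintype.equivFin ι).symm
  rw [← (Equiv.piCongrLeft α e).hasSum_iff, ← e.prod_comp]
  convert! hasSum_prod_pi_fin fun i ↦ hf (e i) using 2 with x
  simp [← e.prod_comp]

theorem tsum_univ_pi_prod {f : ∀ i, α i → 𝕜} (hf : ∀ i, Summable (f i)) (S : ∀ i, Set (α i)) :
    ∑' x : Set.univ.pi S, ∏ i, f i (x.1 i) = ∏ i, ∑' a : S i, f i a :=
  ((Equiv.Set.univPi S).tsum_eq fun x ↦ ∏ i, f i (x i : α i)).trans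
    (hasSum_prod_pi fun i ↦ (hf i).subtype (S i)).tsum_eq

theorem tsum_eval_preimage_prod [DecidableEq ι] {f : ∀ i, α i → 𝕜} (hf : ∀ i, Summable (f i))
    (i : ι) (S : Set (α i)) :
    ∑' x : Function.eval i ⁻¹' S, ∏ k, f k (x.1 k) =
      (∑' a : S, f i a) * ∏ k ∈ Finset.univ.erase i, ∑' a, f k a := by
  rw [← Set.univ_pi_update_univ, tsum_univ_pi_prod hf,
    ← Finset.mul_prod_erase _ _ (Finset.mem_univ i), Function.update_self]
  congr 1
  refine Finset.prod_congr rfl fun k hk ↦ ?_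
  rw [Function.update_of_ne (Finset.ne_of_mem_erase hk), tsum_univ]

theorem tsum_iUnion_le_sum {β : Type*} {f : β → ℝ} (hf₀ : ∀ x, 0 ≤ f x) (hf : Summable f)
    (S : ι → Set β) : ∑' x : ⋃ i, S i, f x ≤ ∑ i, ∑' x : S i, f x := by
  simp_rw [tsum_subtype, ← Summable.tsum_finsetSum fun i _ ↦ hf.indicator (S i)]
  refine (hf.indicator _).tsum_le_tsum (fun x ↦ ?_) (summable_sum fun i _ ↦ hf.indicator (S i))
  have hind_nonneg (i : ι) : 0 ≤ (S i).indicator f x := Set.indicator_nonneg (fun x _ ↦ hf₀ x) x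
  refine Set.indicator_apply_le' (fun hx ↦ ?_) fun _ ↦ Finset.sum_nonneg fun i _ ↦ hind_nonneg i
  obtain ⟨i, hi⟩ := Set.mem_iUnion.1 hx
  calc f x
    _ = (S i).indicator f x := (Set.indicator_of_mem hi f).symm
    _ ≤ ∑ i, (S i).indicator f x :=
      Finset.single_le_sum (fun i _ ↦ hind_nonneg i) (Finset.mem_univ i)

theorem tsum_exists_mem_prod_le {f : ∀ i, α i → ℝ} (hf₀ : ∀ i a, 0 ≤ f i a)
    (hf : ∀ i, Summable (f i)) (S : ∀ i, Set (α i)) {ε : ι → ℝ}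
    (hS : ∀ i, ∑' a : S i, f i a ≤ ε i * ∑' a, f i a) :
    ∑' x : {x : ∀ i, α i // ∃ i, x i ∈ S i}, ∏ i, f i (x.1 i) ≤
      (∑ i, ε i) * ∏ i, ∑' a, f i a := by
  classical
  have hunion : {x : ∀ i, α i | ∃ i, x i ∈ S i} = ⋃ i, Function.eval i ⁻¹' S i := by
    ext; simp
  have hcoord (i : ι) : ∑' x : Function.eval i ⁻¹' S i, ∏ k, f k (x.1 k) ≤
      ε i * ∏ k, ∑' a, f k a := by
    rw [tsum_eval_preimage_prod hf, ← Finset.mul_prod_erase _ _ (Finset.mem_univ i), ← mul_assoc]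
    gcongr
    · exact Finset.prod_nonneg fun k _ ↦ tsum_nonneg (hf₀ k)
    · exact hS i
  calc ∑' x : {x : ∀ i, α i | ∃ i, x i ∈ S i}, ∏ i, f i (x.1 i)
    _ ≤ ∑ i, ∑' x : Function.eval i ⁻¹' S i, ∏ k, f k (x.1 k) := by
      rw [hunion]
      exact tsum_iUnion_le_sum (f := fun x : ∀ i, α i ↦ ∏ k, f k (x k))
        (fun x ↦ Finset.prod_nonneg fun i _ ↦ hf₀ i (x i)) (hasSum_prod_pi hf).summable _
    _ ≤ ∑ i, ε i * ∏ k, ∑' a, f k a := Finset.sum_le_sum fun i _ ↦ hcoord i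
    _ = (∑ i, ε i) * ∏ i, ∑' a, f i a := (Finset.sum_mul ..).symm

end ProductSums

/-- The one-dimensional Gaussian weight `ρ_s(x) = exp (-π x² / s²)`; its restriction to `ℤ` is the
unnormalized discrete Gaussian of width `s`. The weight on `ℤ^m` is the product of the weights of
the coordinates. -/
noncomputable def gaussianWeight (s x : ℝ) : ℝ :=
  exp (-π * x ^ 2 / s ^ 2)

theorem gaussianWeight_nonneg (s x : ℝ) : 0 ≤ gaussianWeight s x :=
  (exp_pos _).le

theorem gaussianWeight_le_of_le {s t : ℝ} (hs : 0 < s) (hst : s ≤ t) (x : ℝ) :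
    gaussianWeight s x ≤ gaussianWeight t x := by
  simp only [gaussianWeight, neg_mul, neg_div]
  gcongr

theorem summable_gaussianWeight_int {s : ℝ} (hs : s ≠ 0) :
    Summable fun j : ℤ ↦ gaussianWeight s j := by
  refine (summable_pow_mul_jacobiTheta₂_term_bound 0 (T := (s ^ 2)⁻¹) (by positivity) 0).congr
    fun j ↦ ?_
  simp only [gaussianWeight, pow_zero, one_mul]
  ring_nf

theorem tsum_gaussianWeight_int_eq {s : ℝ} (hs : 0 < s) :
    ∑' j : ℤ, gaussianWeight s j = s * ∑' j : ℤ, gaussianWeight s⁻¹ j := by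
  have hpoisson := tsum_exp_neg_mul_int_sq (a := (s ^ 2)⁻¹) (by positivity)
  rw [← sqrt_eq_rpow, sqrt_inv, sqrt_sq hs.le, one_div, inv_inv] at hpoisson
  convert hpoisson using 4 <;> (rw [gaussianWeight]; ring_nf)

theorem tsum_gaussianWeight_int_mul_le {s c : ℝ} (hs : 0 < s) (hc : 1 ≤ c) :
    ∑' j : ℤ, gaussianWeight (c * s) j ≤ c * ∑' j : ℤ, gaussianWeight s j := by
  have hcs : 0 < c * s := by positivity
  have hinv : (c * s)⁻¹ ≤ s⁻¹ := inv_anti₀ hs (le_mul_of_one_le_left hs.le hc)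
  calc ∑' j : ℤ, gaussianWeight (c * s) j
    _ = c * s * ∑' j : ℤ, gaussianWeight (c * s)⁻¹ j := tsum_gaussianWeight_int_eq hcs
    _ ≤ c * s * ∑' j : ℤ, gaussianWeight s⁻¹ j := by
      gcongr with j
      · exact summable_gaussianWeight_int (inv_ne_zero hcs.ne')
      · exact summable_gaussianWeight_int (inv_ne_zero hs.ne')
      · exact gaussianWeight_le_of_le (inv_pos.2 hcs) hinv j
    _ = c * ∑' j : ℤ, gaussianWeight s j := by rw [mul_assoc, ← tsum_gaussianWeight_int_eq hs]

theorem gaussianWeight_le_exp_mul_gaussianWeight {s r c x : ℝ} (hs : 0 < s) (hr : 0 ≤ r)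
    (hc : 1 ≤ c) (hx : r * s ≤ |x|) :
    gaussianWeight s x ≤ exp (-π * (1 - 1 / c ^ 2) * r ^ 2) * gaussianWeight (c * s) x := by
  have hcoeff : 0 ≤ 1 - 1 / c ^ 2 :=
    sub_nonneg.2 (div_le_one_of_le₀ (one_le_pow₀ hc) (by positivity))
  have hrx : r ^ 2 ≤ x ^ 2 / s ^ 2 := by
    rw [le_div_iff₀ (by positivity), ← mul_pow, ← sq_abs x]
    gcongr
  calc gaussianWeight s x
    _ = exp (-π * (1 - 1 / c ^ 2) * (x ^ 2 / s ^ 2)) * gaussianWeight (c * s) x := by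
      rw [gaussianWeight, gaussianWeight, ← exp_add]
      ring_nf
    _ ≤ exp (-π * (1 - 1 / c ^ 2) * r ^ 2) * gaussianWeight (c * s) x := by
      simp only [neg_mul]
      gcongr
      exact gaussianWeight_nonneg _ _

theorem tsum_gaussianWeight_int_tail_le {s r c : ℝ} (hs : 0 < s) (hr : 0 ≤ r) (hc : 1 ≤ c) :
    ∑' j : {j : ℤ | r * s < |(j : ℝ)|}, gaussianWeight s j ≤
      c * exp (-π * (1 - 1 / c ^ 2) * r ^ 2) * ∑' j : ℤ, gaussianWeight s j := by
  have hwide : Summable fun j : ℤ ↦ gaussianWeight (c * s) j :=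
    summable_gaussianWeight_int (by positivity)
  set δ := exp (-π * (1 - 1 / c ^ 2) * r ^ 2)
  calc ∑' j : {j : ℤ | r * s < |(j : ℝ)|}, gaussianWeight s j
    _ ≤ ∑' j : {j : ℤ | r * s < |(j : ℝ)|}, δ * gaussianWeight (c * s) j :=
      ((summable_gaussianWeight_int hs.ne').subtype _).tsum_le_tsum
        (fun j ↦ gaussianWeight_le_exp_mul_gaussianWeight hs hr hc j.2.le)
        ((hwide.mul_left δ).subtype _)
    _ ≤ ∑' j : ℤ, δ * gaussianWeight (c * s) j :=
      (hwide.mul_left δ).tsum_subtype_le _ _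
        fun j ↦ mul_nonneg (exp_pos _).le (gaussianWeight_nonneg _ _)
    _ = δ * ∑' j : ℤ, gaussianWeight (c * s) j := tsum_mul_left
    _ ≤ δ * (c * ∑' j : ℤ, gaussianWeight s j) := by
      gcongr
      exact tsum_gaussianWeight_int_mul_le hs hc
    _ = c * δ * ∑' j : ℤ, gaussianWeight s j := by ring

theorem prod_gaussianWeight {ι : Type*} [Fintype ι] (s : ℝ) (x : ι → ℝ) :
    ∏ i, gaussianWeight s (x i) = exp (-π * (∑ i, x i ^ 2) / s ^ 2) := by
  simp only [gaussianWeight, ← exp_sum, ← Finset.mul_sum, ← Finset.sum_div]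

theorem gaussian_linf_tail_bound_general {ι : Type*} [Fintype ι] {s r c : ℝ} (hs : 0 < s)
    (hr : 0 ≤ r) (hc : 1 ≤ c) :
    ∑' e : {e : ι → ℤ // ∃ i, r * s < |(e i : ℝ)|},
        exp (-π * (∑ i, (e.1 i : ℝ) ^ 2) / s ^ 2) ≤
      c * Fintype.card ι * exp (-π * (1 - 1 / c ^ 2) * r ^ 2) *
        (∑' j : ℤ, exp (-π * (j : ℝ) ^ 2 / s ^ 2)) ^ Fintype.card ι := by
  have htail := tsum_exists_mem_prod_le (fun (_ : ι) (j : ℤ) ↦ gaussianWeight_nonneg s j)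
    (fun _ ↦ summable_gaussianWeight_int hs.ne') (fun _ ↦ {j | r * s < |(j : ℝ)|})
    (fun _ ↦ tsum_gaussianWeight_int_tail_le hs hr hc)
  simp only [prod_gaussianWeight, Finset.prod_const, Finset.sum_const, Finset.card_univ,
    nsmul_eq_mul, ← mul_assoc, mul_comm (Fintype.card ι : ℝ) c] at htail
  exact htail

/-- **ℓ∞ tail bound for the m-dimensional discrete Gaussian** (union bound over
coordinates from the paper's Lemma 2.1, with explicit constant): for `s > 0`, `κ ≥ 0`
and `m ≥ 1`,
`∑_{e∈ℤ^m, ‖e‖_∞ > √κ s} exp(−π‖e‖₂²/s²) ≤ 2 m exp(−(3π/4)κ) (∑_{j∈ℤ} exp(−π j²/s²))^m`. -/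
theorem gaussian_linf_tail_bound (s κ : ℝ) (hs : 0 < s) (hκ : 0 ≤ κ) (m : ℕ) (hm : 1 ≤ m) :
    (∑' e : {e : Fin m → ℤ // ∃ i, Real.sqrt κ * s < |((e i : ℤ) : ℝ)|},
        Real.exp (-π * (∑ i, (((e : Fin m → ℤ) i : ℝ))^2) / s^2))
      ≤ 2 * m * Real.exp (-(3 * π / 4) * κ) *
          (∑' j : ℤ, Real.exp (-π * (j : ℝ)^2 / s^2))^m := by
  have hexp : -(3 * π / 4) * κ = -π * (1 - 1 / 2 ^ 2) * √κ ^ 2 := by rw [sq_sqrt hκ]; ring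
  simpa only [hexp, Fintype.card_fin] using
    gaussian_linf_tail_bound_general (ι := Fin m) hs (sqrt_nonneg κ) one_le_two
end
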